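/- Let q : [0,∞) → [1,∞) be a function with q(r) → ∞ as r → ∞, and let K ⊆ ℂ be a compact convex set containing two distinct purely imaginary points. Then there exists a function f ∈ Exp(K) that is hypercyclic for T₁ on Exp(K) and satisfies sup_{x∈ℝ} |f(x)|/q(|x|) < ∞, i.e., |f(x)| = O(q(|x|)) on the real axis. -/

import Mathlib

open Filter Complex

/-- Support function `H_K(z) = sup { Re (z·u) : u ∈ K }` of a set `K ⊆ ℂ`. -/
noncomputable def suppFn (K : Set ℂ) (z : ℂ) : ℝ :=
  sSup ((fun u => (z * u).re) '' K)

/-- The norm `‖f‖_{K,n} = sup_z |f z| · exp (−H_K z − |z|/n)`. -/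
noncomputable def expNorm (K : Set ℂ) (n : ℕ) (f : ℂ → ℂ) : ℝ :=
  sSup (Set.range fun z : ℂ => ‖f z‖ * Real.exp (-(suppFn K z) - ‖z‖ / n))

/-- Membership in `Exp(K)`: `f` is entire and all the norms `‖f‖_{K,n}` are finite. -/
def MemExp (K : Set ℂ) (f : ℂ → ℂ) : Prop :=
  Differentiable ℂ f ∧ ∀ n : ℕ, 0 < n →
    BddAbove (Set.range fun z : ℂ => ‖f z‖ * Real.exp (-(suppFn K z) - ‖z‖ / n))

open scoped Classical in
/-- Lower density of a set of natural numbers. -/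
noncomputable def lowerDensity (A : Set ℕ) : ℝ :=
  liminf (fun N : ℕ =>
    (((Finset.range (N + 1)).filter (fun n => n ∈ A)).card : ℝ) / N) atTop

/-- Lower density of a discrete subset of `ℂ`. -/
noncomputable def ldensC (Λ : Set ℂ) : ℝ :=
  liminf (fun r : ℝ => (Nat.card {z : ℂ // z ∈ Λ ∧ ‖z‖ ≤ r} : ℝ) / r) atTop

/-- `f` is hypercyclic for the translation `T₁` on `Exp(K)`. -/
def HCExp (K : Set ℂ) (f : ℂ → ℂ) : Prop :=
  MemExp K f ∧ ∀ g : ℂ → ℂ, MemExp K g → ∀ n : ℕ, 0 < n → ∀ ε > (0 : ℝ),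
    ∃ k : ℕ, expNorm K n (fun z => f (z + (k : ℂ)) - g z) < ε

/-- `f` is frequently hypercyclic for the translation `T₁` on `Exp(K)`. -/
def FHCExp (K : Set ℂ) (f : ℂ → ℂ) : Prop :=
  MemExp K f ∧ ∀ g : ℂ → ℂ, MemExp K g → ∀ n : ℕ, 0 < n → ∀ ε > (0 : ℝ),
    0 < lowerDensity {k : ℕ | expNorm K n (fun z => f (z + (k : ℂ)) - g z) < ε}

/-- `f` is hypercyclic (Birkhoff-universal) for `T₁` on `H(ℂ)`. -/
def HCEnt (f : ℂ → ℂ) : Prop :=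
  Differentiable ℂ f ∧ ∀ g : ℂ → ℂ, Differentiable ℂ g → ∀ R > (0 : ℝ), ∀ ε > (0 : ℝ),
    ∃ k : ℕ, ∀ z : ℂ, ‖z‖ ≤ R → ‖f (z + (k : ℂ)) - g z‖ < ε

/-- `f` is frequently hypercyclic (frequently Birkhoff-universal) for `T₁` on `H(ℂ)`. -/
def FHCEnt (f : ℂ → ℂ) : Prop :=
  Differentiable ℂ f ∧ ∀ g : ℂ → ℂ, Differentiable ℂ g → ∀ R > (0 : ℝ), ∀ ε > (0 : ℝ),
    0 < lowerDensity {k : ℕ | ∀ z : ℂ, ‖z‖ ≤ R → ‖f (z + (k : ℂ)) - g z‖ < ε}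

/-- `f` is an entire function of (finite) exponential type. -/
def ExpType (f : ℂ → ℂ) : Prop :=
  Differentiable ℂ f ∧ ∃ C τ : ℝ, ∀ z : ℂ, ‖f z‖ ≤ C * Real.exp (τ * ‖z‖)

/-- The indicator function `h_f(θ) = limsup_{r→∞} log |f(r e^{iθ})| / r`. -/
noncomputable def indicatorFn (f : ℂ → ℂ) (θ : ℝ) : ℝ :=
  limsup (fun r : ℝ => Real.log ‖f ((r : ℂ) * Complex.exp (θ * Complex.I))‖ / r) atTop

/-!
Write `E u w z = (exp (w * z) - exp (u * z)) / z`. If `u` and `w` lie on a segment `S` of the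
imaginary axis spanned by points of `K`, then `E u w` and its linear combinations `d` satisfy
`‖d z‖ = O (exp (H_S z) / (1 + ‖z‖))`. As `H_S` is invariant under real translations, `d (· + x)`
has norm `O (1 / |x|)` for every norm of `Exp(K)`, and `d` is `O (1 / |x|)` on the real axis. So if
the integers `k j` are sparse enough, `f z = ∑ j, d j (z - k j)` converges in `Exp(K)`, its
translate `f (· + k i)` is close to `d i`, and `|f x| ≤ ∑ j, C j / (1 + |x - k j|) ≤ 2 * q |x|`,
because the `j`-th term is large only near `k j`, where `q` is larger still.

It remains to choose the `d j` dense in `Exp(K)`, that is, to show that the closed span `V` of the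
`E u w`, for `w` in a sequence tending to `u`, contains `Exp(K)`. This follows from the identity
theorem in the quotient by `V`, applied twice. The curve `w ↦ E u w` lies in `V` at points
accumulating at `u`, so `V` contains its derivatives at `u`, which are the functions
`z ^ m * exp (u * z)`. For `g` in `Exp(K)` the derivatives at `s = 0` of the curve
`s ↦ exp (u * (1 - s) * z) * g (s * z)` are multiples of these, so its value `g` at `s = 1` is
in `V`.
-/

open scoped ENNReal Topology

section HolomorphicLp

variable {F : Type*} [NormedAddCommGroup F] [NormedSpace ℂ F]

lemma norm_dslope_le_of_norm_le {φ : ℂ → F} {c s : ℂ} {r M : ℝ}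
    (hφ : DifferentiableOn ℂ φ (Metric.ball c r)) (hM : ∀ s ∈ Metric.ball c r, ‖φ s‖ ≤ M)
    (hs : s ∈ Metric.ball c r) : ‖dslope φ c s‖ ≤ 2 * M / r := by
  have hc : c ∈ Metric.ball c r := Metric.mem_ball_self (Metric.pos_of_mem_ball hs)
  refine norm_dslope_le_div_of_mapsTo_ball hφ (fun t ht => ?_) hs
  rw [mem_closedBall_iff_norm]
  linarith [norm_sub_le (φ t) (φ c), hM t ht, hM c hc]

lemma norm_sub_sub_smul_deriv_le [CompleteSpace F] {φ : ℂ → F} {c s : ℂ} {r M : ℝ}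
    (hφ : DifferentiableOn ℂ φ (Metric.ball c r)) (hM : ∀ s ∈ Metric.ball c r, ‖φ s‖ ≤ M)
    (hs : s ∈ Metric.ball c r) :
    ‖φ s - φ c - (s - c) • deriv φ c‖ ≤ 2 * (2 * M / r) / r * ‖s - c‖ ^ 2 := by
  have hball : Metric.ball c r ∈ 𝓝 c := Metric.ball_mem_nhds c (Metric.pos_of_mem_ball hs)
  have hdslope : ‖dslope (dslope φ c) c s‖ ≤ 2 * (2 * M / r) / r :=
    norm_dslope_le_of_norm_le ((differentiableOn_dslope hball).2 hφ)
      (fun t ht => norm_dslope_le_of_norm_le hφ hM ht) hs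
  have htaylor : φ s - φ c - (s - c) • deriv φ c = (s - c) ^ 2 • dslope (dslope φ c) c s := by
    rw [pow_two, mul_smul, sub_smul_dslope, smul_sub, sub_smul_dslope, dslope_same]
  rw [htaylor, norm_smul, norm_pow, mul_comm]
  gcongr

variable {ι : Type*} {E : ι → Type*} [∀ i, NormedAddCommGroup (E i)] [∀ i, NormedSpace ℂ (E i)]
  [∀ i, CompleteSpace (E i)]

theorem differentiableOn_lp_infty {U : Set ℂ} (hU : IsOpen U) {f : ℂ → lp E ∞} {M : ℝ}
    (hf : ∀ i, DifferentiableOn ℂ (fun s => f s i) U) (hM : ∀ s ∈ U, ‖f s‖ ≤ M) :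
    DifferentiableOn ℂ f U := by
  intro c hc
  obtain ⟨r, hr, hball⟩ := Metric.isOpen_iff.1 hU c hc
  have hcoord (i : ι) : ∀ s ∈ Metric.ball c r, ‖f s i‖ ≤ M := fun s hs =>
    (lp.norm_apply_le_norm ENNReal.top_ne_zero (f s) i).trans (hM s (hball hs))
  have hderiv (i : ι) : ‖deriv (fun s => f s i) c‖ ≤ 2 * M / r := by
    rw [← dslope_same]
    exact norm_dslope_le_of_norm_le ((hf i).mono hball) (hcoord i) (Metric.mem_ball_self hr)
  let f' : lp E ∞ := ⟨fun i => deriv (fun s => f s i) c,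
    memℓp_infty ⟨2 * M / r, Set.forall_mem_range.2 hderiv⟩⟩
  have hM0 : 0 ≤ M := (norm_nonneg _).trans (hM c hc)
  have htaylor : (fun s => f s - f c - (s - c) • f') =O[𝓝 c] fun s => (s - c) ^ 2 := by
    refine .of_bound (2 * (2 * M / r) / r) ?_
    filter_upwards [Metric.ball_mem_nhds c hr] with s hs
    rw [norm_pow]
    exact lp.norm_le_of_forall_le (by positivity) fun i =>
      norm_sub_sub_smul_deriv_le ((hf i).mono hball) (hcoord i) hs
  have hsq : (fun s : ℂ => (s - c) ^ 2) =o[𝓝 c] fun s => s - c := by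
    refine Asymptotics.isLittleO_norm_left.1 ?_
    simpa only [norm_pow] using Asymptotics.isLittleO_pow_sub_sub c one_lt_two
  exact (hasDerivAt_iff_isLittleO.2 (htaylor.trans_isLittleO hsq)).differentiableAt
    |>.differentiableWithinAt

lemma exists_analyticOnNhd_lp_infty {U : Set ℂ} (hU : IsOpen U) {φ : ℂ → ∀ i, E i} {M : ℝ}
    (hφ : ∀ i, DifferentiableOn ℂ (fun s => φ s i) U) (hM : ∀ s ∈ U, ∀ i, ‖φ s i‖ ≤ M) :
    ∃ f : ℂ → lp E ∞, AnalyticOnNhd ℂ f U ∧ ∀ s ∈ U, ⇑(f s) = φ s := by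
  have hlift : ∀ s, ∃ x : lp E ∞, s ∈ U → ⇑x = φ s := fun s => by
    by_cases hs : s ∈ U
    · exact ⟨⟨φ s, memℓp_infty ⟨M, Set.forall_mem_range.2 (hM s hs)⟩⟩, fun _ => rfl⟩
    · exact ⟨0, fun h => absurd h hs⟩
  choose f hf using hlift
  refine ⟨f, DifferentiableOn.analyticOnNhd ?_ hU, hf⟩
  refine differentiableOn_lp_infty hU (M := |M|) (fun i => ?_) fun s hs => ?_
  · exact (hφ i).congr fun s hs => congrFun (hf s hs) i
  · refine lp.norm_le_of_forall_le (abs_nonneg M) fun i => ?_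
    rw [hf s hs]
    exact (hM s hs i).trans (le_abs_self M)

end HolomorphicLp

section ClosedSubmodule

variable {E G : Type*} [NormedAddCommGroup E] [NormedSpace ℂ E] [CompleteSpace E]
  [NormedAddCommGroup G] [NormedSpace ℂ G]

lemma iteratedDeriv_clm_apply (L : E →L[ℂ] G) {f : ℂ → E} {c : ℂ} (hf : AnalyticAt ℂ f c)
    (m : ℕ) : iteratedDeriv m (fun s => L (f s)) c = L (iteratedDeriv m f c) := by
  simp only [iteratedDeriv_eq_iteratedFDeriv]
  exact congrArg (· fun _ => 1) (L.iteratedFDeriv_comp_left hf.contDiffAt (n := m) le_rfl)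

variable {V : Submodule ℂ E} {f : ℂ → E} {c : ℂ}

lemma iteratedDeriv_mem_of_frequently_mem (hV : IsClosed (V : Set E)) (hf : AnalyticAt ℂ f c)
    (h : ∃ᶠ s in 𝓝[≠] c, f s ∈ V) (m : ℕ) : iteratedDeriv m f c ∈ V := by
  have hquot : AnalyticAt ℂ (fun s => V.mkQL (f s)) c := (V.mkQL.analyticAt _).comp hf
  have hzero : (fun s => V.mkQL (f s)) =ᶠ[𝓝 c] fun _ => 0 :=
    hquot.frequently_zero_iff_eventually_zero.1 (h.mono fun s hs => by simpa using hs)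
  have hderiv : V.mkQL (iteratedDeriv m f c) = 0 := by
    rw [← iteratedDeriv_clm_apply _ hf, hzero.iteratedDeriv_eq]
    simp
  simpa using hderiv

lemma mem_of_forall_iteratedDeriv_mem (hV : IsClosed (V : Set E)) {U : Set ℂ}
    (hU : IsPreconnected U) (hf : AnalyticOnNhd ℂ f U) (hc : c ∈ U)
    (h : ∀ m, iteratedDeriv m f c ∈ V) {s : ℂ} (hs : s ∈ U) : f s ∈ V := by
  have hquot : AnalyticOnNhd ℂ (fun s => V.mkQL (f s)) U := fun s hs =>
    (V.mkQL.analyticAt _).comp (hf s hs)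
  have horder : analyticOrderAt (fun s => V.mkQL (f s)) c = ⊤ := by
    refine ENat.eq_top_iff_forall_ge.2 fun m => ?_
    rw [natCast_le_analyticOrderAt_iff_iteratedDeriv_eq_zero (hquot c hc)]
    intro i _
    rw [iteratedDeriv_clm_apply _ (hf c hc)]
    simpa using h i
  have hzero := hquot.eqOn_zero_of_preconnected_of_eventuallyEq_zero hU hc
    (analyticOrderAt_eq_top.1 horder) hs
  simpa using hzero

end ClosedSubmodule

section SupportFunction

variable {K S : Set ℂ}

lemma re_mul_le_norm_mul_norm (a b : ℂ) : (a * b).re ≤ ‖a‖ * ‖b‖ :=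
  (re_le_norm _).trans (norm_mul a b).le

lemma bddAbove_image_re_mul (hK : Bornology.IsBounded K) (z : ℂ) :
    BddAbove ((fun p => (z * p).re) '' K) := by
  obtain ⟨R, hR⟩ := hK.exists_norm_le
  refine ⟨‖z‖ * R, Set.forall_mem_image.2 fun p hp => ?_⟩
  exact (re_mul_le_norm_mul_norm z p).trans
    (mul_le_mul_of_nonneg_left (hR p hp) (norm_nonneg z))

lemma re_mul_le_suppFn (hK : Bornology.IsBounded K) {p : ℂ} (hp : p ∈ convexHull ℝ K) (z : ℂ) :
    (z * p).re ≤ suppFn K z := by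
  have hconvex : Convex ℝ {p : ℂ | (z * p).re ≤ suppFn K z} :=
    convex_halfSpace_le (reLm.comp (LinearMap.mulLeft ℝ z)).isLinear _
  exact convexHull_min (fun p hp => le_csSup (bddAbove_image_re_mul hK z) ⟨p, hp, rfl⟩) hconvex hp

lemma suppFn_le (hS : S.Nonempty) {z : ℂ} {a : ℝ} (h : ∀ p ∈ S, (z * p).re ≤ a) :
    suppFn S z ≤ a :=
  csSup_le (hS.image _) (Set.forall_mem_image.2 h)

lemma suppFn_le_mul_norm {R : ℝ} (hR : ∀ p ∈ K, ‖p‖ ≤ R) (hR0 : 0 ≤ R) (z : ℂ) :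
    suppFn K z ≤ R * ‖z‖ := by
  refine Real.sSup_le (Set.forall_mem_image.2 fun p hp => ?_) (by positivity)
  rw [mul_comm R]
  exact (re_mul_le_norm_mul_norm z p).trans
    (mul_le_mul_of_nonneg_left (hR p hp) (norm_nonneg z))

lemma suppFn_zero (K : Set ℂ) : suppFn K 0 = 0 := by
  rcases K.eq_empty_or_nonempty with rfl | hK <;> simp [suppFn, *]

lemma suppFn_add_le (hK : Bornology.IsBounded K) (z w : ℂ) :
    suppFn K (z + w) ≤ suppFn K z + suppFn K w := by
  rcases K.eq_empty_or_nonempty with rfl | hne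
  · simp [suppFn]
  refine suppFn_le hne fun p hp => ?_
  rw [add_mul, add_re]
  exact add_le_add (re_mul_le_suppFn hK (subset_convexHull ℝ K hp) z)
    (re_mul_le_suppFn hK (subset_convexHull ℝ K hp) w)

lemma suppFn_ofReal_mul {σ : ℝ} (hσ : 0 ≤ σ) (K : Set ℂ) (z : ℂ) :
    suppFn K (σ * z) = σ * suppFn K z := by
  rw [suppFn, suppFn, ← smul_eq_mul σ, ← Real.sSup_smul_of_nonneg hσ, ← Set.image_smul,
    Set.image_image]
  simp only [mul_assoc, re_ofReal_mul, smul_eq_mul]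

lemma suppFn_add_ofReal (hS : ∀ p ∈ S, p.re = 0) (z : ℂ) (x : ℝ) :
    suppFn S (z + x) = suppFn S z := by
  refine congrArg sSup (Set.image_congr fun p hp => ?_)
  rw [add_mul, add_re, re_ofReal_mul, hS p hp, mul_zero, add_zero]

end SupportFunction

section WeightedSup

variable {K : Set ℂ} {n : ℕ}

/-- The weight `exp (-H_K z - ‖z‖ / n)` of the norm `expNorm K n`. -/
noncomputable def expWeight (K : Set ℂ) (n : ℕ) (z : ℂ) : ℝ :=
  Real.exp (-(suppFn K z) - ‖z‖ / n)

lemma expWeight_pos (K : Set ℂ) (n : ℕ) (z : ℂ) : 0 < expWeight K n z := Real.exp_pos _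

lemma mul_expWeight_le_iff {a B : ℝ} {z : ℂ} :
    a * expWeight K n z ≤ B ↔ a ≤ B * Real.exp (suppFn K z + ‖z‖ / n) := by
  rw [← le_div_iff₀ (expWeight_pos K n z), expWeight, ← neg_add', Real.exp_neg, div_inv_eq_mul]

/-- The bounded functions on `ℂ` divided by the weight `expWeight K n`, so that the range consists
of the functions with finite `expNorm K n`. Closed subspaces for this norm are thereby accessible
as images of closed subspaces of a Banach space. -/
noncomputable def unweight (K : Set ℂ) (n : ℕ) : lp (fun _ : ℂ => ℂ) ∞ →L[ℂ] (ℂ → ℂ) :=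
  ContinuousLinearMap.pi fun z => ((expWeight K n z : ℂ)⁻¹) • lp.evalCLM ℂ (fun _ : ℂ => ℂ) ∞ z

@[simp]
lemma unweight_apply (x : lp (fun _ : ℂ => ℂ) ∞) (z : ℂ) :
    unweight K n x z = (expWeight K n z : ℂ)⁻¹ * x z := rfl

lemma unweight_injective (K : Set ℂ) (n : ℕ) : Function.Injective (unweight K n) := by
  intro x y hxy
  ext z
  have hz : (expWeight K n z : ℂ)⁻¹ ≠ 0 :=
    inv_ne_zero (ofReal_ne_zero.2 (expWeight_pos K n z).ne')
  exact mul_left_cancel₀ hz (congrFun hxy z)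

lemma norm_unweight_mul_expWeight (x : lp (fun _ : ℂ => ℂ) ∞) (z : ℂ) :
    ‖unweight K n x z‖ * expWeight K n z = ‖x z‖ := by
  have hz := expWeight_pos K n z
  rw [unweight_apply, norm_mul, norm_inv, norm_real, Real.norm_of_nonneg hz.le]
  field_simp

lemma norm_unweight_mul_expWeight_le (x : lp (fun _ : ℂ => ℂ) ∞) (z : ℂ) :
    ‖unweight K n x z‖ * expWeight K n z ≤ ‖x‖ :=
  (norm_unweight_mul_expWeight x z).trans_le (lp.norm_apply_le_norm ENNReal.top_ne_zero x z)

lemma exists_analyticOnNhd_unweight {U : Set ℂ} (hU : IsOpen U) {G : ℂ → ℂ → ℂ} {M : ℝ}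
    (hG : ∀ z, DifferentiableOn ℂ (fun s => G s z) U)
    (hM : ∀ s ∈ U, ∀ z, ‖G s z‖ * expWeight K n z ≤ M) :
    ∃ F : ℂ → lp (fun _ : ℂ => ℂ) ∞,
      AnalyticOnNhd ℂ F U ∧ ∀ s ∈ U, unweight K n (F s) = G s := by
  obtain ⟨F, hF, hFG⟩ := exists_analyticOnNhd_lp_infty hU (M := M)
    (φ := fun s z => expWeight K n z * G s z) (fun z => (hG z).const_mul _) fun s hs z => by
      rw [norm_mul, norm_real, Real.norm_of_nonneg (expWeight_pos K n z).le, mul_comm]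
      exact hM s hs z
  refine ⟨F, hF, fun s hs => funext fun z => ?_⟩
  rw [unweight_apply, hFG s hs, inv_mul_cancel_left₀ (ofReal_ne_zero.2 (expWeight_pos K n z).ne')]

lemma exists_unweight_eq {g : ℂ → ℂ} {M : ℝ} (hM : ∀ z, ‖g z‖ * expWeight K n z ≤ M) :
    ∃ x, unweight K n x = g := by
  obtain ⟨F, -, hF⟩ := exists_analyticOnNhd_unweight isOpen_univ (G := fun _ => g)
    (fun _ => differentiableOn_const _) fun _ _ => hM
  exact ⟨F 0, hF 0 trivial⟩

variable {V : Submodule ℂ (lp (fun _ : ℂ => ℂ) ∞)} {U : Set ℂ} {G : ℂ → ℂ → ℂ} {M : ℝ}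

lemma iteratedDeriv_unweight {F : ℂ → lp (fun _ : ℂ => ℂ) ∞} {c : ℂ} (hF : AnalyticAt ℂ F c)
    (hFG : ∀ᶠ s in 𝓝 c, unweight K n (F s) = G s) (m : ℕ) :
    unweight K n (iteratedDeriv m F c) = fun z => iteratedDeriv m (fun s => G s z) c := by
  funext z
  have hcongr : (fun s => unweight K n (F s) z) =ᶠ[𝓝 c] fun s => G s z :=
    hFG.mono fun s hs => congrFun hs z
  rw [← hcongr.iteratedDeriv_eq]
  exact (iteratedDeriv_clm_apply ((ContinuousLinearMap.proj z).comp (unweight K n)) hF m).symm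

theorem iteratedDeriv_mem_map_unweight (hV : IsClosed (V : Set (lp (fun _ : ℂ => ℂ) ∞)))
    (hU : IsOpen U) (hG : ∀ z, DifferentiableOn ℂ (fun s => G s z) U)
    (hM : ∀ s ∈ U, ∀ z, ‖G s z‖ * expWeight K n z ≤ M) {c : ℂ} (hc : c ∈ U)
    (h : ∃ᶠ s in 𝓝[≠] c, G s ∈ V.map (unweight K n).toLinearMap) (m : ℕ) :
    (fun z => iteratedDeriv m (fun s => G s z) c) ∈ V.map (unweight K n).toLinearMap := by
  obtain ⟨F, hF, hFG⟩ := exists_analyticOnNhd_unweight hU hG hM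
  have hFG' : ∀ᶠ s in 𝓝 c, unweight K n (F s) = G s :=
    eventually_of_mem (hU.mem_nhds hc) hFG
  have hmem : ∃ᶠ s in 𝓝[≠] c, F s ∈ V := by
    refine (h.and_eventually (hFG'.filter_mono nhdsWithin_le_nhds)).mono ?_
    rintro s ⟨⟨x, hx, hxs⟩, hs⟩
    rwa [← unweight_injective K n (hxs.trans hs.symm)]
  exact ⟨_, iteratedDeriv_mem_of_frequently_mem hV (hF c hc) hmem m,
    iteratedDeriv_unweight (hF c hc) hFG' m⟩

theorem mem_map_unweight_of_forall_iteratedDeriv_mem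
    (hV : IsClosed (V : Set (lp (fun _ : ℂ => ℂ) ∞))) (hU : IsOpen U) (hU' : IsPreconnected U)
    (hG : ∀ z, DifferentiableOn ℂ (fun s => G s z) U)
    (hM : ∀ s ∈ U, ∀ z, ‖G s z‖ * expWeight K n z ≤ M) {c : ℂ} (hc : c ∈ U)
    (h : ∀ m, (fun z => iteratedDeriv m (fun s => G s z) c) ∈ V.map (unweight K n).toLinearMap)
    {s : ℂ} (hs : s ∈ U) : G s ∈ V.map (unweight K n).toLinearMap := by
  obtain ⟨F, hF, hFG⟩ := exists_analyticOnNhd_unweight hU hG hM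
  refine ⟨F s, mem_of_forall_iteratedDeriv_mem hV hU' hF hc (fun m => ?_) hs, hFG s hs⟩
  obtain ⟨x, hx, hxm⟩ := h m
  have hderiv := iteratedDeriv_unweight (hF c hc) (eventually_of_mem (hU.mem_nhds hc) hFG) m
  rwa [← unweight_injective K n (hxm.trans hderiv.symm)]

end WeightedSup

section ExpQuot

/-- The divided difference `(exp (w * z) - exp (u * z)) / z`, an entire function of `z` with value
`w - u` at `0`. -/
noncomputable def expQuot (u w z : ℂ) : ℂ := dslope (fun z => exp (w * z) - exp (u * z)) 0 z

lemma mul_expQuot (u w z : ℂ) : z * expQuot u w z = exp (w * z) - exp (u * z) := by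
  simpa [expQuot] using sub_smul_dslope (fun z => exp (w * z) - exp (u * z)) 0 z

lemma expQuot_zero (u w : ℂ) : expQuot u w 0 = w - u := by
  have hderiv (a : ℂ) : HasDerivAt (fun z => exp (a * z)) a 0 := by
    simpa using ((hasDerivAt_id (0 : ℂ)).const_mul a).cexp
  rw [expQuot, dslope_same]
  exact ((hderiv w).sub (hderiv u)).deriv

lemma expQuot_self (u z : ℂ) : expQuot u u z = 0 := by
  rcases eq_or_ne z 0 with rfl | hz
  · rw [expQuot_zero, sub_self]
  · simpa [hz] using mul_expQuot u u z

lemma differentiable_expQuot (u w : ℂ) : Differentiable ℂ (expQuot u w) := by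
  rw [← differentiableOn_univ]
  exact (differentiableOn_dslope univ_mem).2 (by fun_prop)

lemma hasDerivAt_expQuot (u w z : ℂ) : HasDerivAt (expQuot u · z) (exp (z * w)) w := by
  rcases eq_or_ne z 0 with rfl | hz
  · simpa only [expQuot_zero, zero_mul, exp_zero] using (hasDerivAt_id' w).sub_const u
  · have hquot : (expQuot u · z) = fun w => (exp (z * w) - exp (u * z)) / z := by
      ext w
      rw [eq_div_iff hz, mul_comm, mul_expQuot, mul_comm w z]
    have hderiv := (((hasDerivAt_id w).const_mul z).cexp.sub_const (exp (u * z))).div_const z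
    rw [hquot]
    simpa only [id, mul_one, mul_div_cancel_right₀ _ hz] using hderiv

lemma norm_expQuot_le {u w z : ℂ} {B : ℝ} (hB : ∀ p ∈ segment ℝ u w, (z * p).re ≤ B) :
    ‖expQuot u w z‖ ≤ Real.exp B * ‖w - u‖ := by
  have hmvt := (convex_segment u w).norm_image_sub_le_of_norm_hasDerivWithin_le
    (fun p _ => (hasDerivAt_expQuot u p z).hasDerivWithinAt) (C := Real.exp B)
    (fun p hp => by rw [norm_exp]; exact Real.exp_le_exp.2 (hB p hp))
    (left_mem_segment ℝ u w) (right_mem_segment ℝ u w)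
  simpa only [expQuot_self, sub_zero] using hmvt

lemma norm_expQuot_mul_expWeight_le {K : Set ℂ} (hK : Bornology.IsBounded K) {u w : ℂ}
    (hu : u ∈ convexHull ℝ K) {n : ℕ} (hw : w ∈ Metric.ball u (1 / n)) (z : ℂ) :
    ‖expQuot u w z‖ * expWeight K n z ≤ 1 / n := by
  have hsegment : segment ℝ u w ⊆ Metric.ball u (1 / n) :=
    (convex_ball u _).segment_subset (Metric.mem_ball_self (Metric.pos_of_mem_ball hw)) hw
  rw [mul_expWeight_le_iff, mul_comm (1 / (n : ℝ))]
  refine (norm_expQuot_le fun p hp => ?_).trans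
    (mul_le_mul_of_nonneg_left (mem_ball_iff_norm.1 hw).le (Real.exp_pos _).le)
  calc (z * p).re = (z * u).re + (z * (p - u)).re := by rw [← add_re]; ring_nf
    _ ≤ suppFn K z + ‖z‖ * (1 / n) := by
        refine add_le_add (re_mul_le_suppFn hK hu z) ((re_mul_le_norm_mul_norm _ _).trans ?_)
        exact mul_le_mul_of_nonneg_left (mem_ball_iff_norm.1 (hsegment hp)).le (norm_nonneg z)
    _ = suppFn K z + ‖z‖ / n := by rw [mul_one_div]

end ExpQuot

section ExpDecay

/-- The entire functions `d` with `‖d z‖ = O (exp (H_S z) / (1 + ‖z‖))` on all of `ℂ`. If `S` is a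
subset of the imaginary axis, they decay like `1 / |x|` under translation by a real `x`. -/
def expDecay (S : Set ℂ) : Submodule ℂ (ℂ → ℂ) where
  carrier := {d | Differentiable ℂ d ∧
    ∃ C : ℝ, ∀ z, ‖d z‖ * (1 + ‖z‖) ≤ C * Real.exp (suppFn S z)}
  zero_mem' := ⟨differentiable_const 0, 0, by simp⟩
  add_mem' := by
    rintro a b ⟨ha, A, hA⟩ ⟨hb, B, hB⟩
    refine ⟨ha.add hb, A + B, fun z => ?_⟩
    calc ‖a z + b z‖ * (1 + ‖z‖) ≤ (‖a z‖ + ‖b z‖) * (1 + ‖z‖) := by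
          gcongr
          exact norm_add_le _ _
      _ ≤ (A + B) * Real.exp (suppFn S z) := by
          rw [add_mul, add_mul]
          exact add_le_add (hA z) (hB z)
  smul_mem' := by
    rintro c a ⟨ha, A, hA⟩
    refine ⟨ha.const_smul c, ‖c‖ * A, fun z => ?_⟩
    rw [Pi.smul_apply, norm_smul, mul_assoc, mul_assoc]
    exact mul_le_mul_of_nonneg_left (hA z) (norm_nonneg c)

variable {S K : Set ℂ}

lemma expQuot_mem_expDecay (hS : Bornology.IsBounded S) {u w : ℂ} (hu : u ∈ convexHull ℝ S)
    (hw : w ∈ convexHull ℝ S) : expQuot u w ∈ expDecay S := by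
  have hexp {p : ℂ} (hp : p ∈ convexHull ℝ S) (z : ℂ) :
      ‖exp (p * z)‖ ≤ Real.exp (suppFn S z) := by
    rw [norm_exp, mul_comm]
    exact Real.exp_le_exp.2 (re_mul_le_suppFn hS hp z)
  refine ⟨differentiable_expQuot u w, ‖w - u‖ + 2, fun z => ?_⟩
  have hquot : ‖expQuot u w z‖ ≤ Real.exp (suppFn S z) * ‖w - u‖ := norm_expQuot_le fun p hp =>
    re_mul_le_suppFn hS ((convex_convexHull ℝ S).segment_subset hu hw hp) z
  have hdiff : ‖z‖ * ‖expQuot u w z‖ ≤ Real.exp (suppFn S z) + Real.exp (suppFn S z) := by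
    rw [← norm_mul, mul_expQuot]
    exact (norm_sub_le _ _).trans (add_le_add (hexp hw z) (hexp hu z))
  linarith

lemma frequently_expQuot_mem_expDecay (hS : Bornology.IsBounded S) (hS' : S.Nontrivial)
    {u : ℂ} (hu : u ∈ convexHull ℝ S) :
    ∃ᶠ w in 𝓝[≠] u, expQuot u w ∈ expDecay S := by
  have hacc : AccPt u (𝓟 (convexHull ℝ S)) :=
    (convex_convexHull ℝ S).isPreconnected.preperfect_of_nontrivial
      (hS'.mono (subset_convexHull ℝ S)) u hu
  exact (accPt_iff_frequently_nhdsNE.1 hacc).mono fun w hw => expQuot_mem_expDecay hS hu hw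

lemma norm_apply_add_ofReal_mul_expWeight_le (hS : ∀ p ∈ S, p.re = 0)
    (hSK : ∀ z, suppFn S z ≤ suppFn K z) {d : ℂ → ℂ} {C : ℝ}
    (hd : ∀ z, ‖d z‖ * (1 + ‖z‖) ≤ C * Real.exp (suppFn S z)) {n : ℕ} (hn : 0 < n) (z : ℂ)
    (x : ℝ) : ‖d (z + x)‖ * expWeight K n z ≤ n * (C / (1 + |x|)) := by
  have hC : 0 ≤ C := by
    have hpos : 0 ≤ C * Real.exp (suppFn S 0) := le_trans (by positivity) (hd 0)
    exact nonneg_of_mul_nonneg_left hpos (Real.exp_pos _)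
  have hx : 1 + |x| ≤ (1 + ‖z + x‖) * (1 + ‖z‖) := by
    have htri : |x| ≤ ‖z + x‖ + ‖z‖ := by
      simpa only [add_sub_cancel_left, norm_real, Real.norm_eq_abs] using norm_sub_le (z + x) z
    nlinarith [mul_nonneg (norm_nonneg (z + x)) (norm_nonneg z)]
  have hexp : 1 + ‖z‖ ≤ n * Real.exp (‖z‖ / n) := by
    have hn' : (1 : ℝ) ≤ n := by exact_mod_cast hn
    calc 1 + ‖z‖ ≤ n * (‖z‖ / n + 1) := by field_simp; linarith
      _ ≤ n * Real.exp (‖z‖ / n) := by gcongr; exact Real.add_one_le_exp _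
  rw [mul_expWeight_le_iff, ← mul_div_assoc, div_mul_eq_mul_div, le_div_iff₀ (by positivity)]
  calc ‖d (z + x)‖ * (1 + |x|) ≤ ‖d (z + x)‖ * (1 + ‖z + x‖) * (1 + ‖z‖) := by
        rw [mul_assoc]; gcongr
    _ ≤ C * Real.exp (suppFn S z) * (1 + ‖z‖) := by
        rw [← suppFn_add_ofReal hS z x]
        exact mul_le_mul_of_nonneg_right (hd _) (by positivity)
    _ ≤ C * Real.exp (suppFn K z) * (n * Real.exp (‖z‖ / n)) := by
        gcongr; exact hSK z
    _ = n * C * Real.exp (suppFn K z + ‖z‖ / n) := by rw [Real.exp_add]; ring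

lemma norm_apply_ofReal_le (hS : ∀ p ∈ S, p.re = 0) {d : ℂ → ℂ} {C : ℝ}
    (hd : ∀ z, ‖d z‖ * (1 + ‖z‖) ≤ C * Real.exp (suppFn S z)) (x : ℝ) :
    ‖d x‖ ≤ C / (1 + |x|) := by
  simpa [expWeight, suppFn_zero] using
    norm_apply_add_ofReal_mul_expWeight_le hS (fun _ => le_rfl) hd one_pos 0 x

end ExpDecay

section Density

variable {K : Set ℂ} {n : ℕ} {u : ℂ} {V : Submodule ℂ (lp (fun _ : ℂ => ℂ) ∞)}

lemma pow_mul_exp_mem_map_unweight (hK : Bornology.IsBounded K) (hn : 0 < n)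
    (hV : IsClosed (V : Set (lp (fun _ : ℂ => ℂ) ∞))) (hu : u ∈ convexHull ℝ K)
    (h : ∃ᶠ w in 𝓝[≠] u, expQuot u w ∈ V.map (unweight K n).toLinearMap) (m : ℕ) :
    (fun z => z ^ m * exp (z * u)) ∈ V.map (unweight K n).toLinearMap := by
  have hmem := iteratedDeriv_mem_map_unweight hV Metric.isOpen_ball
    (fun z w _ => (hasDerivAt_expQuot u w z).differentiableAt.differentiableWithinAt)
    (fun w hw => norm_expQuot_mul_expWeight_le hK hu hw)
    (Metric.mem_ball_self (by positivity)) h (m + 1)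
  convert hmem using 2 with z
  rw [iteratedDeriv_succ', show deriv (expQuot u · z) = fun w => exp (z * w) from
    funext fun w => (hasDerivAt_expQuot u w z).deriv, iteratedDeriv_cexp_const_mul]

lemma re_add_suppFn_mul_le (hK : Bornology.IsBounded K) (hu : u ∈ convexHull ℝ K) {R δ : ℝ}
    (hR : ∀ p ∈ convexHull ℝ K, ‖p‖ ≤ R) {s : ℂ}
    (hs : s ∈ Metric.thickening δ (segment ℝ (0 : ℂ) 1)) (z : ℂ) :
    (z * (u * (1 - s))).re + suppFn K (z * s) ≤ suppFn K z + 2 * R * δ * ‖z‖ := by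
  obtain ⟨p, hp, hsp⟩ := Metric.mem_thickening_iff.1 hs
  rw [segment_eq_image] at hp
  obtain ⟨σ, ⟨hσ0, hσ1⟩, rfl⟩ := hp
  simp only [smul_zero, zero_add, real_smul, mul_one, dist_eq_norm] at hsp
  have huR : ‖u‖ ≤ R := hR u hu
  have hR0 : 0 ≤ R := (norm_nonneg u).trans huR
  have herror : ‖z * (s - σ)‖ ≤ ‖z‖ * δ := by
    rw [norm_mul]
    gcongr
  have hexp : (z * (u * (1 - s))).re ≤ (1 - σ) * suppFn K z + R * (‖z‖ * δ) := by
    have hsplit : z * (u * (1 - s)) = ((1 - σ : ℝ) : ℂ) * (z * u) + u * -(z * (s - σ)) := by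
      push_cast; ring
    rw [hsplit, add_re, re_ofReal_mul]
    refine add_le_add (mul_le_mul_of_nonneg_left (re_mul_le_suppFn hK hu z) (by linarith)) ?_
    refine (re_mul_le_norm_mul_norm _ _).trans ?_
    rw [norm_neg]
    gcongr
  have hsupp : suppFn K (z * s) ≤ σ * suppFn K z + R * (‖z‖ * δ) := by
    rw [show z * s = σ * z + z * (s - σ) by ring]
    refine (suppFn_add_le hK _ _).trans (add_le_add (suppFn_ofReal_mul hσ0 K z).le ?_)
    exact (suppFn_le_mul_norm (fun p hp => hR p (subset_convexHull ℝ K hp)) hR0 _).trans (by gcongr)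
  linarith

lemma norm_exp_mul_comp_mul_expWeight_le (hK : Bornology.IsBounded K) (hu : u ∈ convexHull ℝ K)
    (hn : 0 < n) {R M : ℝ} (hR : ∀ p ∈ convexHull ℝ K, ‖p‖ ≤ R) {g : ℂ → ℂ}
    (hg : ∀ z, ‖g z‖ * expWeight K (4 * n) z ≤ M) {s : ℂ}
    (hs : s ∈ Metric.thickening (1 / (4 * n * (R + 1))) (segment ℝ (0 : ℂ) 1)) (z : ℂ) :
    ‖exp (z * (u * (1 - s))) * g (z * s)‖ * expWeight K n z ≤ M := by
  have hn' : (1 : ℝ) ≤ n := by exact_mod_cast hn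
  have hR0 : 0 ≤ R := (norm_nonneg u).trans (hR u hu)
  have hM : 0 ≤ M :=
    le_trans (mul_nonneg (norm_nonneg _) (expWeight_pos K (4 * n) 0).le) (hg 0)
  have hs2 : ‖s‖ ≤ 2 := by
    obtain ⟨p, hp, hsp⟩ := Metric.mem_thickening_iff.1 hs
    have hp1 : ‖p‖ ≤ 1 := mem_closedBall_zero_iff.1 <|
      (convex_closedBall (0 : ℂ) 1).segment_subset (by simp) (by simp) hp
    have hδ : 1 / (4 * n * (R + 1)) ≤ 1 := (div_le_one (by positivity)).2 (by nlinarith)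
    rw [dist_eq_norm] at hsp
    linarith [norm_le_norm_add_norm_sub' s p]
  have hexponent : (z * (u * (1 - s))).re + (suppFn K (z * s) + ‖z * s‖ / (4 * n : ℕ)) ≤
      suppFn K z + ‖z‖ / n := by
    have hδ : 2 * R * (1 / (4 * n * (R + 1))) * ‖z‖ ≤ ‖z‖ / n / 2 := by
      field_simp
      nlinarith [norm_nonneg z]
    have hzs : ‖z * s‖ / (4 * n : ℕ) ≤ ‖z‖ / n / 2 := by
      rw [norm_mul]
      push_cast
      field_simp
      nlinarith [norm_nonneg z]
    linarith [re_add_suppFn_mul_le hK hu hR hs z]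
  rw [mul_expWeight_le_iff, norm_mul, norm_exp]
  calc Real.exp (z * (u * (1 - s))).re * ‖g (z * s)‖
      ≤ Real.exp (z * (u * (1 - s))).re *
          (M * Real.exp (suppFn K (z * s) + ‖z * s‖ / (4 * n : ℕ))) := by
        gcongr
        exact mul_expWeight_le_iff.1 (hg _)
    _ = M * Real.exp
          ((z * (u * (1 - s))).re + (suppFn K (z * s) + ‖z * s‖ / (4 * n : ℕ))) := by
        rw [Real.exp_add (z * (u * (1 - s))).re, mul_left_comm]
    _ ≤ M * Real.exp (suppFn K z + ‖z‖ / n) := by gcongr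

lemma iteratedDeriv_exp_mul_comp_zero (u z : ℂ) {g : ℂ → ℂ} (hg : Differentiable ℂ g) (m : ℕ) :
    iteratedDeriv m (fun s => exp (z * (u * (1 - s))) * g (z * s)) 0 =
      iteratedDeriv m (fun y => exp (-(u * y)) * g y) 0 * (z ^ m * exp (z * u)) := by
  have hfactor : (fun s => exp (z * (u * (1 - s))) * g (z * s)) =
      fun s => exp (z * u) * (fun y => exp (-(u * y)) * g y) (z * s) := by
    funext s
    rw [← mul_assoc (exp _), ← exp_add]
    ring_nf
  have hsmooth : ContDiff ℂ m fun y => exp (-(u * y)) * g y :=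
    Differentiable.contDiff (by fun_prop)
  rw [hfactor, iteratedDeriv_const_mul_field, iteratedDeriv_comp_const_mul hsmooth]
  simp only [mul_zero]
  ring

theorem memExp_mem_map_unweight (hK : Bornology.IsBounded K) (hn : 0 < n)
    (hV : IsClosed (V : Set (lp (fun _ : ℂ => ℂ) ∞))) (hu : u ∈ convexHull ℝ K)
    (h : ∀ m : ℕ, (fun z => z ^ m * exp (z * u)) ∈ V.map (unweight K n).toLinearMap)
    {g : ℂ → ℂ} (hg : MemExp K g) : g ∈ V.map (unweight K n).toLinearMap := by
  obtain ⟨R, hR⟩ := (isBounded_convexHull.2 hK).exists_norm_le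
  obtain ⟨M, hM⟩ := hg.2 (4 * n) (by positivity)
  have hR0 : 0 ≤ R := (norm_nonneg u).trans (hR u hu)
  have hg_diff := hg.1
  set U : Set ℂ := Metric.thickening (1 / (4 * n * (R + 1))) (segment ℝ 0 1)
  have hsub : segment ℝ (0 : ℂ) 1 ⊆ U := Metric.self_subset_thickening (by positivity) _
  -- A holomorphic curve from `g 0 * exp (z * u)` at `s = 0` to `g` at `s = 1`, inside the space of
  -- functions of finite norm because `H_K` is sublinear.
  set G : ℂ → ℂ → ℂ := fun s z => exp (z * (u * (1 - s))) * g (z * s) with hG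
  have hderiv (m : ℕ) : (fun z => iteratedDeriv m (fun s => G s z) 0) =
      iteratedDeriv m (fun y => exp (-(u * y)) * g y) 0 • fun z => z ^ m * exp (z * u) :=
    funext fun z => iteratedDeriv_exp_mul_comp_zero u z hg.1 m
  have hmem := mem_map_unweight_of_forall_iteratedDeriv_mem (G := G) hV Metric.isOpen_thickening
    ((convex_segment (0 : ℂ) 1).thickening _).isPreconnected
    (fun z => Differentiable.differentiableOn (by fun_prop))
    (fun s hs => norm_exp_mul_comp_mul_expWeight_le hK hu hn hR
      (fun z => hM (Set.mem_range_self z)) hs)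
    (hsub (left_mem_segment ℝ 0 1))
    (fun m => by rw [hderiv]; exact Submodule.smul_mem _ _ (h m))
    (hsub (right_mem_segment ℝ 0 1))
  simpa [hG] using hmem

theorem exists_seq_dense (hK : Bornology.IsBounded K) (hn : 0 < n) (hu : u ∈ convexHull ℝ K)
    {W : Submodule ℂ (ℂ → ℂ)} (hW : ∃ᶠ w in 𝓝[≠] u, expQuot u w ∈ W) :
    ∃ D : ℕ → ℂ → ℂ, (∀ i, D i ∈ W) ∧ ∀ g, MemExp K g → ∀ ε > 0, ∃ i, ∀ z,
      ‖D i z - g z‖ * expWeight K n z ≤ ε := by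
  obtain ⟨w, hw, hwW⟩ := exists_seq_forall_of_frequently hW
  set A : Set (lp (fun _ : ℂ => ℂ) ∞) := unweight K n ⁻¹' Set.range fun j => expQuot u (w j)
  have hA : A.Countable := (Set.countable_range _).preimage (unweight_injective K n)
  have hspan : Submodule.span ℂ A ≤ W.comap (unweight K n).toLinearMap := by
    refine Submodule.span_le.2 ?_
    rintro x ⟨j, hj⟩
    exact show unweight K n x ∈ W from hj ▸ hwW j
  obtain ⟨t, htA, htc, hdense⟩ := hA.isSeparable.span (R := ℂ).exists_countable_dense_subset
  obtain ⟨e, rfl⟩ := htc.exists_eq_range (closure_nonempty_iff.1 ⟨0, hdense (zero_mem _)⟩)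
  refine ⟨fun i => unweight K n (e i), fun i => hspan (htA ⟨i, rfl⟩), fun g hg ε hε => ?_⟩
  have hfreq : ∃ᶠ w in 𝓝[≠] u, expQuot u w ∈
      (Submodule.span ℂ A).topologicalClosure.map (unweight K n).toLinearMap := by
    refine hw.frequently (Eventually.frequently ?_)
    have hball : Metric.ball u (1 / n) ∈ 𝓝 u := Metric.ball_mem_nhds u (by positivity)
    filter_upwards [hw (mem_nhdsWithin_of_mem_nhds hball)] with j hj
    obtain ⟨x, hx⟩ := exists_unweight_eq (norm_expQuot_mul_expWeight_le hK hu hj)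
    exact ⟨x, subset_closure (Submodule.subset_span ⟨j, hx.symm⟩), hx⟩
  have hclosed := (Submodule.span ℂ A).isClosed_topologicalClosure
  obtain ⟨x, hx, rfl⟩ := memExp_mem_map_unweight hK hn hclosed hu
    (pow_mul_exp_mem_map_unweight hK hn hclosed hu hfreq) hg
  obtain ⟨_, ⟨i, rfl⟩, hi⟩ := Metric.mem_closure_iff.1
    (closure_minimal hdense isClosed_closure hx) ε hε
  refine ⟨i, fun z => ?_⟩
  rw [dist_comm, dist_eq_norm] at hi
  calc ‖unweight K n (e i) z - unweight K n x z‖ * expWeight K n z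
      = ‖unweight K n (e i - x) z‖ * expWeight K n z := by rw [map_sub, Pi.sub_apply]
    _ ≤ ε := (norm_unweight_mul_expWeight_le (e i - x) z).trans hi.le

theorem exists_seq_frequently_dense (hK : Bornology.IsBounded K) (hu : u ∈ convexHull ℝ K)
    {W : Submodule ℂ (ℂ → ℂ)} (hW : ∃ᶠ w in 𝓝[≠] u, expQuot u w ∈ W) :
    ∃ D : ℕ → ℂ → ℂ, (∀ i, D i ∈ W) ∧ ∀ g, MemExp K g → ∀ n : ℕ, 0 < n → ∀ ε > 0,
      ∃ᶠ i in atTop, ∀ z, ‖D i z - g z‖ * expWeight K n z ≤ ε := by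
  choose D hD hdense using fun n : ℕ => exists_seq_dense hK n.succ_pos hu hW
  -- The third coordinate makes every function recur infinitely often.
  refine ⟨fun i => D i.unpair.1 i.unpair.2.unpair.1, fun i => hD _ _, fun g hg n hn ε hε => ?_⟩
  obtain ⟨n, rfl⟩ := Nat.exists_eq_succ_of_ne_zero hn.ne'
  obtain ⟨i, hi⟩ := hdense n g hg ε hε
  refine frequently_atTop.2 fun N => ⟨Nat.pair n (Nat.pair i N), ?_, ?_⟩
  · exact (Nat.right_le_pair i N).trans (Nat.right_le_pair _ _)
  · simpa only [Nat.unpair_pair] using hi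

end Density

section TranslateSum

variable {K : Set ℂ} {n : ℕ}

lemma norm_tsum_mul_expWeight_le {f : ℕ → ℂ} {M : ℕ → ℝ} {a : ℝ} {z : ℂ} (hM : HasSum M a)
    (hf : ∀ j, ‖f j‖ * expWeight K n z ≤ M j) : ‖∑' j, f j‖ * expWeight K n z ≤ a :=
  mul_expWeight_le_iff.2 <|
    tsum_of_norm_bounded (hM.mul_right _) fun j => mul_expWeight_le_iff.1 (hf j)

lemma summable_of_mul_expWeight_le {f : ℕ → ℂ} {M : ℕ → ℝ} {z : ℂ} (hM : Summable M)
    (hf : ∀ j, ‖f j‖ * expWeight K n z ≤ M j) : Summable f :=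
  .of_norm_bounded (hM.mul_right _) fun j => mul_expWeight_le_iff.1 (hf j)

lemma memExp_tsum (hK : Bornology.IsBounded K) {F : ℕ → ℂ → ℂ}
    (hF : ∀ j, Differentiable ℂ (F j))
    (hM : ∀ n : ℕ, 0 < n → ∃ M : ℕ → ℝ, Summable M ∧ ∀ j z, ‖F j z‖ * expWeight K n z ≤ M j) :
    MemExp K fun z => ∑' j, F j z := by
  refine ⟨fun z => ?_, fun n hn => ?_⟩
  · obtain ⟨M, hMs, hMF⟩ := hM 1 one_pos
    obtain ⟨R, hR0, hR⟩ := hK.exists_pos_norm_le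
    have hM0 (j : ℕ) : 0 ≤ M j :=
      le_trans (mul_nonneg (norm_nonneg _) (expWeight_pos K 1 0).le) (hMF j 0)
    have hbound : ∀ j, ∀ w ∈ Metric.ball (0 : ℂ) (‖z‖ + 1),
        ‖F j w‖ ≤ M j * Real.exp (R * (‖z‖ + 1) + (‖z‖ + 1)) := fun j w hw => by
      have hw' : ‖w‖ ≤ ‖z‖ + 1 := (mem_ball_zero_iff.1 hw).le
      refine (mul_expWeight_le_iff.1 (hMF j w)).trans ?_
      rw [Nat.cast_one, div_one]
      gcongr
      · exact hM0 j
      · exact (suppFn_le_mul_norm hR hR0.le w).trans (by gcongr)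
    exact (differentiableOn_tsum_of_summable_norm (hMs.mul_right _)
      (fun j => (hF j).differentiableOn) Metric.isOpen_ball hbound).differentiableAt
        (Metric.isOpen_ball.mem_nhds (by simp))
  · obtain ⟨M, hMs, hMF⟩ := hM n hn
    exact ⟨∑' j, M j, Set.forall_mem_range.2 fun z =>
      norm_tsum_mul_expWeight_le hMs.hasSum fun j => hMF j z⟩

/-- The superposition `∑ j, d j (z - k j)` of translates: applying `T₁` to it `k i` times puts
`d i` back in place. -/
noncomputable def translateSum (d : ℕ → ℂ → ℂ) (k : ℕ → ℕ) (z : ℂ) : ℂ := ∑' j, d j (z - k j)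

variable {d : ℕ → ℂ → ℂ} {k : ℕ → ℕ} {b : ℕ → ℝ}

lemma norm_translateSum_sub_mul_expWeight_le (hb : Summable b) (hb0 : ∀ j, 0 ≤ b j) {i : ℕ}
    (hi : ∀ j, i ≠ j → ∀ z,
      ‖d j (z + ((k i - k j : ℝ) : ℂ))‖ * expWeight K n z ≤ n * (b i * b j)) (z : ℂ) :
    ‖translateSum d k (z + k i) - d i z‖ * expWeight K n z ≤ n * (b i * ∑' j, b j) := by
  have hsum : HasSum (fun j => n * (b i * b j)) (n * (b i * ∑' j, b j)) :=
    (hb.hasSum.mul_left _).mul_left _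
  have hbound (j : ℕ) : ‖if j = i then 0 else d j (z + k i - k j)‖ * expWeight K n z ≤
      n * (b i * b j) := by
    split_ifs with hj
    · simp only [norm_zero, zero_mul]
      exact mul_nonneg n.cast_nonneg (mul_nonneg (hb0 i) (hb0 j))
    · simpa only [ofReal_sub, ofReal_natCast, add_sub_assoc] using hi j (Ne.symm hj) z
  have hsplit : translateSum d k (z + k i) =
      d i z + ∑' j, if j = i then 0 else d j (z + k i - k j) := by
    have hsummable : Summable fun j => d j (z + k i - k j) :=
      (summable_of_mul_expWeight_le hsum.summable hbound).congr_cofinite <| by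
        filter_upwards [(Set.finite_singleton i).compl_mem_cofinite] with j hj
        exact if_neg hj
    rw [translateSum, hsummable.tsum_eq_add_tsum_ite i, add_sub_cancel_right]
  rw [hsplit, add_sub_cancel_left]
  exact norm_tsum_mul_expWeight_le hsum hbound

theorem hcExp_translateSum (hK : Bornology.IsBounded K) (hb : Summable b) (hb0 : ∀ j, 0 ≤ b j)
    (hd : ∀ j, Differentiable ℂ (d j)) {c : ℝ}
    (hd_single : ∀ n : ℕ, 0 < n → ∀ j z,
      ‖d j (z - k j)‖ * expWeight K n z ≤ n * (b j * c))
    (hd_pair : ∀ n : ℕ, 0 < n → ∀ i j, i ≠ j → ∀ z,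
      ‖d j (z + ((k i - k j : ℝ) : ℂ))‖ * expWeight K n z ≤ n * (b i * b j))
    (hdense : ∀ g, MemExp K g → ∀ n : ℕ, 0 < n → ∀ ε > 0,
      ∃ᶠ i in atTop, ∀ z, ‖d i z - g z‖ * expWeight K n z ≤ ε) :
    HCExp K (translateSum d k) := by
  refine ⟨memExp_tsum hK (fun j => (hd j).comp (by fun_prop)) fun n hn =>
    ⟨_, (hb.mul_right c).mul_left _, hd_single n hn⟩, fun g hg n hn ε hε => ?_⟩
  have htail : ∀ᶠ i in atTop, n * (b i * ∑' j, b j) < ε / 2 := by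
    have hlim := (hb.tendsto_atTop_zero.mul_const (∑' j, b j)).const_mul (n : ℝ)
    rw [zero_mul, mul_zero] at hlim
    exact hlim.eventually_lt_const (half_pos hε)
  obtain ⟨i, hig, hi⟩ := ((hdense g hg n hn (ε / 2) (half_pos hε)).and_eventually htail).exists
  refine ⟨k i, lt_of_le_of_lt (csSup_le (Set.range_nonempty _) (Set.forall_mem_range.2 fun z => ?_))
    (show n * (b i * ∑' j, b j) + ε / 2 < ε by linarith)⟩
  calc ‖translateSum d k (z + k i) - g z‖ * expWeight K n z
      ≤ ‖translateSum d k (z + k i) - d i z‖ * expWeight K n z +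
          ‖d i z - g z‖ * expWeight K n z := by
        rw [← add_mul]
        exact mul_le_mul_of_nonneg_right (norm_sub_le_norm_sub_add_norm_sub _ _ _)
          (expWeight_pos K n z).le
    _ ≤ n * (b i * ∑' j, b j) + ε / 2 := add_le_add
        (norm_translateSum_sub_mul_expWeight_le hb hb0 (hd_pair n hn i) z) (hig z)

end TranslateSum

section SparseSequence

lemma exists_nat_seq_gap_ge (L : ℕ → ℝ) :
    ∃ k : ℕ → ℕ, (∀ j, L j ≤ k j) ∧ ∀ i j, i < j → L j ≤ (k j : ℝ) - k i := by
  have hgap (i j : ℕ) (hij : i ≤ j) :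
      L j + ∑ l ∈ Finset.range i, (⌈L l⌉₊ : ℝ) ≤ ∑ l ∈ Finset.range (j + 1), (⌈L l⌉₊ : ℝ) := by
    rw [Finset.sum_range_succ, add_comm]
    gcongr
    exact Nat.le_ceil (L j)
  refine ⟨fun j => ∑ l ∈ Finset.range (j + 1), ⌈L l⌉₊, fun j => ?_, fun i j hij => ?_⟩
  · simpa using hgap 0 j (Nat.zero_le j)
  · push_cast
    linarith [hgap (i + 1) j hij]

lemma eventually_div_one_add_le (C : ℝ) {e : ℝ} (he : 0 < e) :
    ∀ᶠ r : ℝ in atTop, ∀ t ≥ r, C / (1 + t) ≤ e :=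
  eventually_forall_ge_atTop.2 <|
    ((tendsto_const_nhds.div_atTop (tendsto_atTop_add_const_left atTop 1 tendsto_id)
      ).eventually_lt_const he).mono fun _ h => h.le

lemma eventually_div_one_add_abs_sub_le {q : ℝ → ℝ} (hq1 : ∀ r, 0 ≤ r → 1 ≤ q r)
    (hq : Tendsto q atTop atTop) (C : ℝ) {e : ℝ} (he : 0 < e) :
    ∀ᶠ r : ℝ in atTop, ∀ t ≥ r, ∀ x : ℝ, C / (1 + |x - t|) ≤ e * q |x| := by
  obtain ⟨A, hA⟩ := eventually_atTop.1 (hq.eventually_ge_atTop (C / e))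
  have hfar := (tendsto_atTop_add_const_right atTop (-A) tendsto_id).eventually
    (eventually_div_one_add_le C he)
  refine eventually_forall_ge_atTop.2 (hfar.mono fun r hr x => ?_)
  have hqx : 1 ≤ q |x| := hq1 _ (abs_nonneg x)
  rcases le_total A |x| with hx | hx
  · rw [div_le_iff₀ (by positivity)]
    calc C ≤ e * q |x| := by
          rw [mul_comm, ← div_le_iff₀ he]
          exact hA _ hx
      _ ≤ e * q |x| * (1 + |x - r|) :=
          le_mul_of_one_le_right (by positivity) (by linarith [abs_nonneg (x - r)])
  · have hxr : r + -A ≤ |x - r| := by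
      linarith [neg_abs_le (x - r), le_abs_self x]
    exact (hr _ hxr).trans (le_mul_of_one_le_right he.le hqx)

theorem exists_sparse_seq {q : ℝ → ℝ} (hq1 : ∀ r, 0 ≤ r → 1 ≤ q r) (hq : Tendsto q atTop atTop)
    (C : ℕ → ℝ) {b : ℕ → ℝ} (hb : ∀ j, 0 < b j) :
    ∃ k : ℕ → ℕ, (∀ i j, i ≠ j → C j / (1 + |(k i : ℝ) - k j|) ≤ b i * b j) ∧
      ∀ j (x : ℝ), C j / (1 + |x - k j|) ≤ b j * q |x| := by
  have hpair (m : ℕ) : ∀ᶠ r : ℝ in atTop, ∀ i ≤ m, ∀ j ≤ m, ∀ t ≥ r, C j / (1 + t) ≤ b i * b j :=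
    (Set.finite_le_nat m).eventually_all.2 fun i _ => (Set.finite_le_nat m).eventually_all.2
      fun j _ => eventually_div_one_add_le (C j) (mul_pos (hb i) (hb j))
  choose L hL_pair hL_growth using fun m =>
    ((hpair m).and (eventually_div_one_add_abs_sub_le hq1 hq (C m) (hb m))).exists
  obtain ⟨k, hk, hgap⟩ := exists_nat_seq_gap_ge L
  refine ⟨k, fun i j hij => ?_, fun j => hL_growth j _ (hk j)⟩
  rcases hij.lt_or_gt with h | h
  · refine hL_pair j i h.le j le_rfl _ ?_
    rw [abs_sub_comm]
    exact (hgap i j h).trans (le_abs_self _)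
  · exact hL_pair i i le_rfl j h.le _ ((hgap j i h).trans (le_abs_self _))

end SparseSequence

section Growth

lemma norm_translateSum_ofReal_le {d : ℕ → ℂ → ℂ} {k : ℕ → ℕ} {b : ℕ → ℝ} (hb : Summable b)
    {x y : ℝ} (h : ∀ j, ‖d j ((x - k j : ℝ) : ℂ)‖ ≤ b j * y) :
    ‖translateSum d k x‖ ≤ (∑' j, b j) * y :=
  tsum_of_norm_bounded (hb.hasSum.mul_right y) fun j => by
    simpa only [ofReal_sub, ofReal_natCast] using h j

theorem exists_hcExp_translateSum {q : ℝ → ℝ} (hq1 : ∀ r, 0 ≤ r → 1 ≤ q r)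
    (hq : Tendsto q atTop atTop) {K S : Set ℂ} (hK : Bornology.IsBounded K)
    (hS : ∀ p ∈ S, p.re = 0) (hSK : ∀ z, suppFn S z ≤ suppFn K z) {d : ℕ → ℂ → ℂ}
    (hd : ∀ j, d j ∈ expDecay S)
    (hdense : ∀ g, MemExp K g → ∀ n : ℕ, 0 < n → ∀ ε > 0,
      ∃ᶠ i in atTop, ∀ z, ‖d i z - g z‖ * expWeight K n z ≤ ε) :
    ∃ k : ℕ → ℕ, HCExp K (translateSum d k) ∧
      ∃ C, ∀ x : ℝ, ‖translateSum d k x‖ ≤ C * q |x| := by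
  choose hd_diff C hC using hd
  obtain ⟨k, hk_pair, hk_growth⟩ :=
    exists_sparse_seq hq1 hq C (b := fun j => (1 / 2 : ℝ) ^ j) fun j => by positivity
  have htranslate {n : ℕ} (hn : 0 < n) (j : ℕ) (x : ℝ) {B : ℝ} (hB : C j / (1 + |x|) ≤ B) (z : ℂ) :
      ‖d j (z + x)‖ * expWeight K n z ≤ n * B :=
    (norm_apply_add_ofReal_mul_expWeight_le hS hSK (hC j) hn z x).trans (by gcongr)
  have hsingle {n : ℕ} (hn : 0 < n) (j : ℕ) (z : ℂ) :
      ‖d j (z - k j)‖ * expWeight K n z ≤ n * ((1 / 2) ^ j * q |0|) := by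
    simpa [sub_eq_add_neg] using htranslate hn j _ (hk_growth j 0) z
  have hhc : HCExp K (translateSum d k) :=
    hcExp_translateSum hK summable_geometric_two (fun j => by positivity) hd_diff
      (fun n hn => hsingle hn) (fun n hn i j hij => htranslate hn j _ (hk_pair i j hij)) hdense
  refine ⟨k, hhc, ∑' j : ℕ, (1 / 2 : ℝ) ^ j, fun x => ?_⟩
  exact norm_translateSum_ofReal_le summable_geometric_two fun j =>
    (norm_apply_ofReal_le hS (hC j) _).trans (hk_growth j x)

end Growth

theorem stmt1_general (q : ℝ → ℝ) (hq1 : ∀ r : ℝ, 0 ≤ r → 1 ≤ q r)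
    (hq : Tendsto q atTop atTop)
    (K : Set ℂ) (hK : Bornology.IsBounded K)
    (u v : ℂ) (hu : u ∈ convexHull ℝ K) (hv : v ∈ convexHull ℝ K) (huv : u ≠ v)
    (hur : u.re = 0) (hvr : v.re = 0) :
    ∃ f : ℂ → ℂ, HCExp K f ∧ ∃ C : ℝ, ∀ x : ℝ, ‖f (x : ℂ)‖ ≤ C * q |x| := by
  have hS : ∀ p ∈ ({u, v} : Set ℂ), p.re = 0 := by
    rintro p (rfl | rfl) <;> assumption
  have hSK (z : ℂ) : suppFn {u, v} z ≤ suppFn K z := by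
    refine suppFn_le (Set.insert_nonempty u {v}) ?_
    rintro p (rfl | rfl)
    exacts [re_mul_le_suppFn hK hu z, re_mul_le_suppFn hK hv z]
  have hquot : ∃ᶠ w in 𝓝[≠] u, expQuot u w ∈ expDecay {u, v} :=
    frequently_expQuot_mem_expDecay (Set.toFinite {u, v}).isBounded (Set.nontrivial_pair huv)
      (subset_convexHull ℝ _ (Set.mem_insert u {v}))
  obtain ⟨d, hd, hdense⟩ := exists_seq_frequently_dense hK hu hquot
  obtain ⟨k, hk⟩ := exists_hcExp_translateSum hq1 hq hK hS hSK hd hdense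
  exact ⟨translateSum d k, hk⟩

/-- **Theorem 2.** If `K` contains two distinct purely imaginary points, there is a
Birkhoff-hypercyclic function in `Exp(K)` growing like `O(q(|x|))` on the real axis. -/
theorem stmt1 (q : ℝ → ℝ) (hq1 : ∀ r : ℝ, 0 ≤ r → 1 ≤ q r)
    (hq : Tendsto q atTop atTop)
    (K : Set ℂ) (hKc : IsCompact K) (hKconv : Convex ℝ K)
    (u v : ℂ) (hu : u ∈ K) (hv : v ∈ K) (huv : u ≠ v)
    (hur : u.re = 0) (hvr : v.re = 0) :
    ∃ f : ℂ → ℂ, HCExp K f ∧ ∃ C : ℝ, ∀ x : ℝ, ‖f (x : ℂ)‖ ≤ C * q |x| :=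
  stmt1_general q hq1 hq K hKc.isBounded u v (subset_convexHull ℝ K hu) (subset_convexHull ℝ K hv)
    huv hur hvr
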